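/- Let u : ℝⁿ → ℝ be a continuous, locally semiconcave function. If u is differentiable at every point of ℝⁿ, then u is continuously differentiable, i.e. u ∈ C¹(ℝⁿ). -/

import Mathlib

/-- A continuous function `u : ℝⁿ → ℝ` is locally semiconcave if on every open convex
set with compact closure it is the sum of a `C²` function and a concave function. -/
def LocallySemiconcave {n : ℕ} (u : EuclideanSpace ℝ (Fin n) → ℝ) : Prop :=
  ∀ K : Set (EuclideanSpace ℝ (Fin n)), IsOpen K → Convex ℝ K → IsCompact (closure K) →
    ∃ g c : EuclideanSpace ℝ (Fin n) → ℝ,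
      ContDiffOn ℝ 2 g K ∧ ConcaveOn ℝ K c ∧ ∀ x ∈ K, u x = g x + c x

/-!
A concave function bounded by `M` on a ball of radius `r` is `4 * M / r`-Lipschitz on the
concentric ball of radius `r / 2`. If `c` is concave and differentiable at `x`, apply this to
`c` minus its first-order Taylor polynomial at `x`, where `M = ε * r` for `r` small: the remainder
is `4 * ε`-Lipschitz near `x`, so `c` is strictly differentiable at `x`. Adding a `C¹` function
preserves strict differentiability, and a function that is strictly differentiable everywhere
is `C¹`.
-/

open Filter Metric Set
open scoped Topology NNReal

section StrictDerivative

variable {𝕜 E F : Type*} [NontriviallyNormedField 𝕜] [NormedAddCommGroup E] [NormedSpace 𝕜 E]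
  [NormedAddCommGroup F] [NormedSpace 𝕜 F] {f : E → F} {f' : E →L[𝕜] F} {x : E}

theorem hasStrictFDerivAt_of_forall_approximatesLinearOn
    (h : ∀ ε : ℝ≥0, 0 < ε → ∃ s ∈ 𝓝 x, ApproximatesLinearOn f f' s ε) :
    HasStrictFDerivAt f f' x := by
  refine .of_isLittleO <| Asymptotics.isLittleO_iff.2 fun ε hε ↦ ?_
  lift ε to ℝ≥0 using hε.le
  obtain ⟨s, hs, hfs⟩ := h ε hε
  filter_upwards [prod_mem_nhds hs hs] with p ⟨hp₁, hp₂⟩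
  exact hfs p.1 hp₁ p.2 hp₂

theorem continuousAt_fderiv_of_hasStrictFDerivAt (hf : HasStrictFDerivAt f f' x)
    (hd : ∀ᶠ y in 𝓝 x, DifferentiableAt 𝕜 f y) : ContinuousAt (fderiv 𝕜 f) x := by
  rw [ContinuousAt, hf.hasFDerivAt.fderiv, (nhds_basis_closedBall (x := f')).tendsto_right_iff]
  intro ε hε
  lift ε to ℝ≥0 using hε.le
  obtain ⟨s, hs, hfs⟩ := hf.approximates_deriv_on_nhds (.inr hε)
  filter_upwards [eventually_mem_nhds_iff.2 hs, hd] with y hsy hdy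
  rw [mem_closedBall, dist_eq_norm]
  exact (hdy.hasFDerivAt.sub f'.hasFDerivAt).le_of_lipschitzOn hsy hfs.lipschitzOnWith

theorem contDiff_one_of_hasStrictFDerivAt {f' : E → E →L[𝕜] F}
    (hf : ∀ x, HasStrictFDerivAt f (f' x) x) : ContDiff 𝕜 1 f :=
  have hd : Differentiable 𝕜 f := fun x ↦ (hf x).differentiableAt
  contDiff_one_iff_fderiv.2 ⟨hd, continuous_iff_continuousAt.2 fun x ↦
    continuousAt_fderiv_of_hasStrictFDerivAt (hf x) (.of_forall hd)⟩

end StrictDerivative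

section Concave

variable {E : Type*} [NormedAddCommGroup E] [NormedSpace ℝ E] {f : E → ℝ} {f' : E →L[ℝ] ℝ}
  {x : E}

theorem approximatesLinearOn_ball_half_of_concaveOn {r : ℝ} {ε : ℝ≥0} (hr : 0 < r)
    (hf : ConcaveOn ℝ (ball x r) f)
    (hε : ∀ y ∈ ball x r, |f y - f x - f' (y - x)| ≤ ε * ‖y - x‖) :
    ApproximatesLinearOn f f' (ball x (r / 2)) (4 * ε) := by
  let remainder : E → ℝ := fun y ↦ f y - f' y + (f' x - f x)
  have concave_sub : ConcaveOn ℝ (ball x r) (f - ⇑f') := hf.sub (f'.toLinearMap.convexOn hf.1)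
  have concave_remainder : ConcaveOn ℝ (ball x r) remainder := concave_sub.add_const _
  have abs_remainder_le : ∀ y, dist y x < r → |remainder y| ≤ ε * r := fun y hy ↦
    calc |remainder y| = |f y - f x - f' (y - x)| := by
          rw [map_sub]; congr 1; ring
      _ ≤ ε * ‖y - x‖ := hε y hy
      _ ≤ ε * r := by gcongr; exact (dist_eq_norm y x ▸ hy).le
  have lipschitz_remainder :=
    concave_remainder.lipschitzOnWith_of_abs_le (half_pos hr) abs_remainder_le
  have lipschitz_const : (2 * (ε * r) / (r / 2)).toNNReal = 4 * ε := by
    rw [show 2 * (ε * r) / (r / 2) = ((4 * ε : ℝ≥0) : ℝ) by push_cast; field_simp; ring,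
      Real.toNNReal_coe]
  rw [lipschitz_const, sub_half] at lipschitz_remainder
  rw [ApproximatesLinearOn.approximatesLinearOn_iff_lipschitzOnWith]
  simpa [remainder, lipschitzOnWith_iff_dist_le_mul, dist_add_right] using lipschitz_remainder

theorem hasStrictFDerivAt_of_concaveOn {K : Set E} (hf : ConcaveOn ℝ K f) (hK : K ∈ 𝓝 x)
    (hx : HasFDerivAt f f' x) : HasStrictFDerivAt f f' x := by
  refine hasStrictFDerivAt_of_forall_approximatesLinearOn fun ε hε ↦ ?_
  have taylor : ∀ᶠ y in 𝓝 x, ‖f y - f x - f' (y - x)‖ ≤ (ε / 4 : ℝ≥0) * ‖y - x‖ :=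
    hx.isLittleO.def (by positivity)
  obtain ⟨r, hr, hball⟩ := Metric.mem_nhds_iff.1 (inter_mem hK taylor)
  refine ⟨ball x (r / 2), ball_mem_nhds x (half_pos hr), ?_⟩
  simpa only [mul_div_cancel₀ ε (four_ne_zero' ℝ≥0)] using
    approximatesLinearOn_ball_half_of_concaveOn hr
      (hf.subset (fun y hy ↦ (hball hy).1) (convex_ball x r)) fun y hy ↦ (hball hy).2

theorem hasStrictFDerivAt_of_eqOn_contDiffAt_add_concaveOn {u g c : E → ℝ} {K : Set E}
    (hK : K ∈ 𝓝 x) (hg : ContDiffAt ℝ 1 g x) (hc : ConcaveOn ℝ K c) (hugc : EqOn u (g + c) K)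
    (hu : DifferentiableAt ℝ u x) : HasStrictFDerivAt u (fderiv ℝ u x) x := by
  have hug : ConcaveOn ℝ K (u - g) := hc.congr fun y hy ↦ by simp [hugc hy]
  have hg' : HasStrictFDerivAt g (fderiv ℝ g x) x := hg.hasStrictFDerivAt one_ne_zero
  simpa using (hasStrictFDerivAt_of_concaveOn hug hK (hu.hasFDerivAt.sub hg'.hasFDerivAt)).add hg'

theorem contDiff_one_of_locallySemiconcave_of_differentiable_general {u : E → ℝ}
    (hsc : ∀ x, ∃ K ∈ 𝓝 x, ∃ g c : E → ℝ,
      ContDiffAt ℝ 1 g x ∧ ConcaveOn ℝ K c ∧ EqOn u (g + c) K)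
    (hdiff : Differentiable ℝ u) : ContDiff ℝ 1 u :=
  contDiff_one_of_hasStrictFDerivAt fun x ↦
    let ⟨_, hK, _, _, hg, hc, hugc⟩ := hsc x
    hasStrictFDerivAt_of_eqOn_contDiffAt_add_concaveOn hK hg hc hugc (hdiff x)

end Concave

theorem LocallySemiconcave.exists_mem_nhds_eqOn_add {n : ℕ} {u : EuclideanSpace ℝ (Fin n) → ℝ}
    (hsc : LocallySemiconcave u) (x : EuclideanSpace ℝ (Fin n)) :
    ∃ K ∈ 𝓝 x, ∃ g c : EuclideanSpace ℝ (Fin n) → ℝ,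
      ContDiffAt ℝ 1 g x ∧ ConcaveOn ℝ K c ∧ EqOn u (g + c) K := by
  have hK : ball x 1 ∈ 𝓝 x := ball_mem_nhds x one_pos
  obtain ⟨g, c, hg, hc, hugc⟩ :=
    hsc (ball x 1) isOpen_ball (convex_ball x 1) isBounded_ball.isCompact_closure
  exact ⟨ball x 1, hK, g, c, (hg.contDiffAt hK).of_le one_le_two, hc, hugc⟩

/-- A continuous, locally semiconcave function which is differentiable at every point
is continuously differentiable. -/
theorem contDiff_one_of_locallySemiconcave_of_differentiable {n : ℕ}
    (u : EuclideanSpace ℝ (Fin n) → ℝ) (hu : Continuous u)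
    (hsc : LocallySemiconcave u)
    (hdiff : ∀ x : EuclideanSpace ℝ (Fin n), DifferentiableAt ℝ u x) :
    ContDiff ℝ 1 u :=
  contDiff_one_of_locallySemiconcave_of_differentiable_general
    hsc.exists_mem_nhds_eqOn_add hdiff
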